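/- Under the system model, the covariance matrix of the stacked received pilot signal satisfies E[ψ_j ψ_jᴴ] = Ψ_j ⊗ I_N; equivalently, for all pilot times b₁, b₂ ∈ {1,…,B}, the N×N block satisfies E[y_j(b₁) y_j(b₂)ᴴ] = [Ψ_j]_{b₁,b₂} · I_N. -/

import Mathlib

open MeasureTheory ProbabilityTheory Matrix Complex
open scoped ProbabilityTheory Kronecker

/-- Deterministic phase-drift damping matrix
`D_{δ(t)} = diag(e^{−δ(t−1)/2}, …, e^{−δ(t−B)/2})`; the `b`-th diagonal entry
(`b : Fin B`, corresponding to pilot time `b+1`) is `e^{−δ(t−(b+1))/2}`. -/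
noncomputable def Dmat (δ : ℝ) (t B : ℕ) : Matrix (Fin B) (Fin B) ℂ :=
  Matrix.diagonal fun b => (Real.exp (-(δ / 2) * ((t : ℝ) - ((b : ℕ) + 1))) : ℂ)

/-- Deterministic pilot matrix `X_{ℓm}` built from the pilot sequence `xv`:
diagonal entries `|x(b)|²(1+κ²)` and off-diagonal entries `x(b₁)x(b₂)* e^{−δ|b₁−b₂|/2}`. -/
noncomputable def Xmat {B : ℕ} (κ δ : ℝ) (xv : Fin B → ℂ) : Matrix (Fin B) (Fin B) ℂ :=
  Matrix.of fun b₁ b₂ =>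
    if b₁ = b₂ then ((Complex.normSq (xv b₁) * (1 + κ ^ 2) : ℝ) : ℂ)
    else xv b₁ * star (xv b₂) * (Real.exp (-(δ / 2) * |((b₁ : ℕ) : ℝ) - ((b₂ : ℕ) : ℝ)|) : ℂ)

/-- Deterministic matrix `Ψ_j = Σ_ℓ Σ_m λ_{jℓm} X_{ℓm} + σ²ξ I_B`. -/
noncomputable def PsiMat {B L K : ℕ} (lam : Fin L → Fin K → ℝ) (σ2 ξ κ δ : ℝ)
    (x : Fin L → Fin K → Fin B → ℂ) : Matrix (Fin B) (Fin B) ℂ :=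
  (∑ l, ∑ m, ((lam l m : ℝ) : ℂ) • Xmat κ δ (x l m)) + ((σ2 * ξ : ℝ) : ℂ) • 1

/-- The uplink massive MIMO system model at base station `j`, on the probability space `Ω`,
with `N` antennas, pilot length `B`, `L` cells, `K` users per cell, channel attenuations
`lam l k = λ_{jlk}`, noise variance `σ2 = σ²`, noise amplification `ξ`, distortion parameter
`κ`, phase-drift variance `δ`, and deterministic pilot sequences `x l k : Fin B → ℂ`
(pilot time `b+1` for `b : Fin B`).  All underlying real random sources are mutually
independent: channel real/imaginary parts `hRe, hIm ~ N(0, λ_{jlk}/2)` (so the channel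
coefficients are `CN(0, λ_{jlk})`), phase-drift increments `dphi n u ~ N(0, δ)` (`u ≥ 1`),
distortion real/imaginary parts `zRe, zIm ~ N(0, 1/2)` (so `z ~ CN(0,1)`), and receiver-noise
real/imaginary parts `etaRe, etaIm ~ N(0, σ²ξ/2)` (so `η ~ CN(0, σ²ξ)`). -/
structure MIMOModel (Ω : Type*) [MeasureSpace Ω] (N B L K : ℕ)
    (lam : Fin L → Fin K → ℝ) (σ2 ξ κ δ : ℝ) (x : Fin L → Fin K → Fin B → ℂ) where
  hRe : Fin L → Fin K → Fin N → Ω → ℝ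
  hIm : Fin L → Fin K → Fin N → Ω → ℝ
  dphi : Fin N → ℕ → Ω → ℝ
  zRe : Fin N → ℕ → Ω → ℝ
  zIm : Fin N → ℕ → Ω → ℝ
  etaRe : Fin N → ℕ → Ω → ℝ
  etaIm : Fin N → ℕ → Ω → ℝ
  meas_hRe : ∀ l k n, Measurable (hRe l k n)
  meas_hIm : ∀ l k n, Measurable (hIm l k n)
  meas_dphi : ∀ n u, Measurable (dphi n u)
  meas_zRe : ∀ n s, Measurable (zRe n s)
  meas_zIm : ∀ n s, Measurable (zIm n s)
  meas_etaRe : ∀ n s, Measurable (etaRe n s)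
  meas_etaIm : ∀ n s, Measurable (etaIm n s)
  law_hRe : ∀ l k n, Measure.map (hRe l k n) ℙ = gaussianReal 0 (Real.toNNReal (lam l k / 2))
  law_hIm : ∀ l k n, Measure.map (hIm l k n) ℙ = gaussianReal 0 (Real.toNNReal (lam l k / 2))
  law_dphi : ∀ n u, Measure.map (dphi n u) ℙ = gaussianReal 0 (Real.toNNReal δ)
  law_zRe : ∀ n s, Measure.map (zRe n s) ℙ = gaussianReal 0 (Real.toNNReal (1 / 2))
  law_zIm : ∀ n s, Measure.map (zIm n s) ℙ = gaussianReal 0 (Real.toNNReal (1 / 2))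
  law_etaRe : ∀ n s, Measure.map (etaRe n s) ℙ = gaussianReal 0 (Real.toNNReal (σ2 * ξ / 2))
  law_etaIm : ∀ n s, Measure.map (etaIm n s) ℙ = gaussianReal 0 (Real.toNNReal (σ2 * ξ / 2))
  indep : iIndepFun (m := fun _ => (inferInstance : MeasurableSpace ℝ))
    (fun i : (Fin L × Fin K × Fin N × Bool) ⊕ (Fin N × ℕ) ⊕ (Fin N × ℕ × Bool) ⊕
        (Fin N × ℕ × Bool) =>
      match i with
      | Sum.inl (l, k, n, false) => hRe l k n
      | Sum.inl (l, k, n, true) => hIm l k n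
      | Sum.inr (Sum.inl (n, u)) => dphi n u
      | Sum.inr (Sum.inr (Sum.inl (n, s, false))) => zRe n s
      | Sum.inr (Sum.inr (Sum.inl (n, s, true))) => zIm n s
      | Sum.inr (Sum.inr (Sum.inr (n, s, false))) => etaRe n s
      | Sum.inr (Sum.inr (Sum.inr (n, s, true))) => etaIm n s) (ℙ : Measure Ω)

namespace MIMOModel

variable {Ω : Type*} [MeasureSpace Ω] {N B L K : ℕ} {lam : Fin L → Fin K → ℝ}
  {σ2 ξ κ δ : ℝ} {x : Fin L → Fin K → Fin B → ℂ}

variable (M : MIMOModel Ω N B L K lam σ2 ξ κ δ x)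

/-- Accumulated phase drift `φ_{jn}(s) = Σ_{u=1}^{s} Δ_{jn}(u)`. -/
noncomputable def phase (n : Fin N) (s : ℕ) (ω : Ω) : ℝ :=
  ∑ u ∈ Finset.Icc 1 s, M.dphi n u ω

/-- Channel coefficient `h_{jlk}^{(n)} ~ CN(0, λ_{jlk})`. -/
noncomputable def ch (l : Fin L) (k : Fin K) (n : Fin N) (ω : Ω) : ℂ :=
  Complex.mk (M.hRe l k n ω) (M.hIm l k n ω)

/-- Distortion variable `z_{jn}(s) ~ CN(0,1)`. -/
noncomputable def z (n : Fin N) (s : ℕ) (ω : Ω) : ℂ :=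
  Complex.mk (M.zRe n s ω) (M.zIm n s ω)

/-- Receiver noise `η_j^{(n)}(s) ~ CN(0, σ²ξ)`. -/
noncomputable def eta (n : Fin N) (s : ℕ) (ω : Ω) : ℂ :=
  Complex.mk (M.etaRe n s ω) (M.etaIm n s ω)

/-- Received pilot signal at antenna `n`, pilot time `b+1` (for `b : Fin B`):
`y_j^{(n)}(b) = e^{iφ_{jn}(b)} Σ_l Σ_m h_{jlm}^{(n)} x_{lm}(b)
  + κ (Σ_l Σ_m |x_{lm}(b)|² |h_{jlm}^{(n)}|²)^{1/2} z_{jn}(b) + η_j^{(n)}(b)`. -/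
noncomputable def y (n : Fin N) (b : Fin B) (ω : Ω) : ℂ :=
  Complex.exp (Complex.I * ((M.phase n ((b : ℕ) + 1) ω : ℝ) : ℂ))
      * ∑ l, ∑ m, M.ch l m n ω * x l m b
    + (κ : ℂ) * ((Real.sqrt (∑ l, ∑ m, Complex.normSq (x l m b)
        * Complex.normSq (M.ch l m n ω)) : ℝ) : ℂ) * M.z n ((b : ℕ) + 1) ω
    + M.eta n ((b : ℕ) + 1) ω

/-- Effective channel at time `t`: `h_{jlk}(t)` has `n`-th entry `e^{iφ_{jn}(t)} h_{jlk}^{(n)}`. -/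
noncomputable def hEff (l : Fin L) (k : Fin K) (t : ℕ) (n : Fin N) (ω : Ω) : ℂ :=
  Complex.exp (Complex.I * ((M.phase n t ω : ℝ) : ℂ)) * M.ch l k n ω

/-- LMMSE channel estimate `ĥ_{jlk}(t) = λ_{jlk} Σ_b c_b y_j(b)` with
`(c_1, …, c_B) = x̃_{lk}ᴴ D_{δ(t)} Ψ_j⁻¹`. -/
noncomputable def hHat (l : Fin L) (k : Fin K) (t : ℕ) (n : Fin N) (ω : Ω) : ℂ :=
  ((lam l k : ℝ) : ℂ) * ∑ b,
    Matrix.vecMul (star (x l k)) (Dmat δ t B * (PsiMat lam σ2 ξ κ δ x)⁻¹) b * M.y n b ω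

/-- Data-phase distortion noise `υ_j(t)` with `n`-th entry
`κ (Σ_l Σ_m p_{lm} |h_{jlm}^{(n)}|²)^{1/2} z_{jn}(t)`. -/
noncomputable def ups (p : Fin L → Fin K → ℝ) (t : ℕ) (n : Fin N) (ω : Ω) : ℂ :=
  (κ : ℂ) * ((Real.sqrt (∑ l, ∑ m, p l m * Complex.normSq (M.ch l m n ω)) : ℝ) : ℂ)
    * M.z n t ω

/-- The uplink SINR of user `k` in cell `j` at time `t` with the MRC filter
`v_{jk}(t) = ĥ_{jjk}(t)`. -/
noncomputable def SINR (p : Fin L → Fin K → ℝ) (j : Fin L) (k : Fin K) (t : ℕ) : ℝ :=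
  p j k * Complex.normSq (∫ ω, ∑ n, star (M.hHat j k t n ω) * M.hEff j k t n ω) /
    ((∑ l, ∑ m, p l m * ∫ ω, Complex.normSq (∑ n, star (M.hHat j k t n ω) * M.hEff l m t n ω))
      - p j k * Complex.normSq (∫ ω, ∑ n, star (M.hHat j k t n ω) * M.hEff j k t n ω)
      + (∫ ω, Complex.normSq (∑ n, star (M.hHat j k t n ω) * M.ups p t n ω))
      + σ2 * ξ * ∫ ω, ∑ n, Complex.normSq (M.hHat j k t n ω))

end MIMOModel


set_option linter.unusedSectionVars false

namespace MIMOModel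

section Aux

variable {Ω : Type*} [MeasureSpace Ω] [IsProbabilityMeasure (ℙ : Measure Ω)]
  {N B L K : ℕ} {lam : Fin L → Fin K → ℝ}
  {σ2 ξ κ δ : ℝ} {x : Fin L → Fin K → Fin B → ℂ}

/-- index type of the sources -/
abbrev Idx (N L K : ℕ) : Type := (Fin L × Fin K × Fin N × Bool) ⊕ (Fin N × ℕ) ⊕
  (Fin N × ℕ × Bool) ⊕ (Fin N × ℕ × Bool)

/-- all sources -/
def src (M : MIMOModel Ω N B L K lam σ2 ξ κ δ x) : Idx N L K → Ω → ℝ := fun i =>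
  match i with
      | Sum.inl (l, k, n, false) => M.hRe l k n
      | Sum.inl (l, k, n, true) => M.hIm l k n
      | Sum.inr (Sum.inl (n, u)) => M.dphi n u
      | Sum.inr (Sum.inr (Sum.inl (n, s, false))) => M.zRe n s
      | Sum.inr (Sum.inr (Sum.inl (n, s, true))) => M.zIm n s
      | Sum.inr (Sum.inr (Sum.inr (n, s, false))) => M.etaRe n s
      | Sum.inr (Sum.inr (Sum.inr (n, s, true))) => M.etaIm n s

/-- sigma algebra of a set of sources -/
def sig (M : MIMOModel Ω N B L K lam σ2 ξ κ δ x) (S : Set (Idx N L K)) : MeasurableSpace Ω :=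
  ⨆ i ∈ S, MeasurableSpace.comap (M.src i) inferInstance

variable (M : MIMOModel Ω N B L K lam σ2 ξ κ δ x)

lemma src_meas0 (i) : Measurable (M.src i) := by
  rcases i with ⟨l, k, n, _ | _⟩ | ⟨n, u⟩ | ⟨n, s, _ | _⟩ | ⟨n, s, _ | _⟩
  · exact M.meas_hRe l k n
  · exact M.meas_hIm l k n
  · exact M.meas_dphi n u
  · exact M.meas_zRe n s
  · exact M.meas_zIm n s
  · exact M.meas_etaRe n s
  · exact M.meas_etaIm n s

lemma sig_le (S : Set (Idx N L K)) : M.sig S ≤ MeasureSpace.toMeasurableSpace :=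
  iSup₂_le fun i _ => (M.src_meas0 i).comap_le

lemma src_meas {S : Set (Idx N L K)} {i} (hi : i ∈ S) : Measurable[M.sig S] (M.src i) := by
  have h : MeasurableSpace.comap (M.src i) inferInstance ≤ M.sig S :=
    le_iSup₂_of_le (f := fun i (_ : i ∈ S) => MeasurableSpace.comap (M.src i) inferInstance)
      i hi le_rfl
  exact Measurable.of_comap_le h

lemma indepS {S T : Set (Idx N L K)} (hST : Disjoint S T) {f g : Ω → ℂ}
    (hf : Measurable[M.sig S] f) (hg : Measurable[M.sig T] g) : IndepFun f g ℙ := by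
  have h := indep_iSup_of_disjoint (fun i => (M.src_meas0 i).comap_le) M.indep hST
  rw [IndepFun_iff_Indep]
  exact indep_of_indep_of_le_left (indep_of_indep_of_le_right h hg.comap_le) hf.comap_le

lemma int_mul {S T : Set (Idx N L K)} (hST : Disjoint S T) {f g : Ω → ℂ}
    (hf : Measurable[M.sig S] f) (hg : Measurable[M.sig T] g) :
    ∫ ω, f ω * g ω = (∫ ω, f ω) * ∫ ω, g ω :=
  (M.indepS hST hf hg).integral_fun_mul_eq_mul_integral
    (hf.mono (M.sig_le S) le_rfl).aestronglyMeasurable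
    (hg.mono (M.sig_le T) le_rfl).aestronglyMeasurable

/-- complex Gaussian from pair -/
noncomputable def cpx (a b : Ω → ℝ) (ω : Ω) : ℂ := Complex.mk (a ω) (b ω)

lemma cpx_meas {m : MeasurableSpace Ω} {a b : Ω → ℝ} (ha : Measurable[m] a)
    (hb : Measurable[m] b) : Measurable[m] (cpx a b) := by
  have : cpx a b = fun ω => (a ω : ℂ) + (b ω : ℂ) * Complex.I := by
    ext ω; exact Complex.mk_eq_add_mul_I _ _
  rw [this]
  fun_prop

section gauss
variable {a b : Ω → ℝ} {v : ℝ} (ha : Measurable a) (hb : Measurable b)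
  (la : Measure.map a ℙ = gaussianReal 0 (Real.toNNReal (v / 2)))
  (lb : Measure.map b ℙ = gaussianReal 0 (Real.toNNReal (v / 2))) (hv : 0 ≤ v)

include ha la in
lemma g_memLp : MemLp a 2 ℙ := by
  have h : MemLp id 2 (Measure.map a ℙ) := by
    rw [la]; exact memLp_id_gaussianReal' 2 (by simp)
  exact h.comp_of_map ha.aemeasurable

include ha la in
lemma g_mean : ∫ ω, a ω = 0 := by
  have := integral_map (μ := ℙ) (φ := a) ha.aemeasurable (f := fun y : ℝ => y)
    (by fun_prop)
  rw [← this, la, integral_id_gaussianReal]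

include ha la hv in
lemma g_sq : ∫ ω, (a ω)^2 = v / 2 := by
  have := integral_map (μ := ℙ) (φ := a) ha.aemeasurable (f := fun y : ℝ => y^2)
    (by fun_prop)
  rw [← this, la]
  have h2 := variance_id_gaussianReal (μ := 0) (v := Real.toNNReal (v / 2))
  rw [variance_of_integral_eq_zero (by fun_prop) (by simp)] at h2
  simp only [id] at h2
  rw [h2, Real.coe_toNNReal _ (by positivity)]

include ha hb la lb in
lemma c_memLp : MemLp (cpx a b) 2 ℙ := by
  have : cpx a b = fun ω => (a ω : ℂ) + (b ω : ℂ) * Complex.I := by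
    ext ω; exact Complex.mk_eq_add_mul_I _ _
  rw [this]
  have h1 : MemLp (fun ω => (a ω : ℂ)) 2 ℙ := (g_memLp ha la).ofReal
  have h2 : MemLp (fun ω => (b ω : ℂ)) 2 ℙ := (g_memLp hb lb).ofReal
  have h3 : MemLp (fun ω => (b ω : ℂ) * Complex.I) 2 ℙ := MemLp.mul_const h2 Complex.I
  exact h1.add h3

include ha hb la lb in
lemma c_mean : ∫ ω, cpx a b ω = 0 := by
  have : cpx a b = fun ω => (a ω : ℂ) + (b ω : ℂ) * Complex.I := by
    ext ω; exact Complex.mk_eq_add_mul_I _ _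
  have h1 : Integrable (fun ω => (a ω : ℂ)) ℙ := ((g_memLp ha la).integrable (by simp)).ofReal
  have h2 : Integrable (fun ω => (b ω : ℂ) * Complex.I) ℙ :=
    ((g_memLp hb lb).integrable (by simp)).ofReal.mul_const _
  rw [this, integral_add h1 h2, integral_mul_const, integral_complex_ofReal,
    integral_complex_ofReal, g_mean ha la, g_mean hb lb]
  simp

include ha hb la lb hv in
lemma c_normSq : ∫ ω, Complex.normSq (cpx a b ω) = v := by
  have h1 := (g_memLp ha la).integrable_sq
  have h2 := (g_memLp hb lb).integrable_sq
  have : ∀ ω, Complex.normSq (cpx a b ω) = a ω ^ 2 + b ω ^ 2 := by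
    intro ω; simp [cpx, Complex.normSq_mk]; ring
  simp_rw [this]
  rw [integral_add h1 h2, g_sq ha la hv, g_sq hb lb hv]
  ring

include ha hb la lb hv in
lemma c_sq : ∫ ω, cpx a b ω * star (cpx a b ω) = v := by
  rw [← c_normSq ha hb la lb hv, ← integral_complex_ofReal]
  congr 1; ext ω
  exact Complex.mul_conj _
end gauss


/-- channel sources -/
def Sh : Set (Idx N L K) := {i | ∃ p, i = Sum.inl p}
/-- phase sources -/
def Sp : Set (Idx N L K) := {i | ∃ p, i = Sum.inr (Sum.inl p)}
/-- distortion sources -/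
def Sz : Set (Idx N L K) := {i | ∃ p, i = Sum.inr (Sum.inr (Sum.inl p))}
/-- noise sources -/
def Se : Set (Idx N L K) := {i | ∃ p, i = Sum.inr (Sum.inr (Sum.inr p))}

lemma ch_meas {S : Set (Idx N L K)} (l k n) (h : ∀ c, Sum.inl (l, k, n, c) ∈ S) :
    Measurable[M.sig S] (M.ch l k n) :=
  cpx_meas (M.src_meas (h false)) (M.src_meas (h true))

lemma z_meas {S : Set (Idx N L K)} (n s)
    (h : ∀ c, Sum.inr (Sum.inr (Sum.inl (n, s, c))) ∈ S) :
    Measurable[M.sig S] (M.z n s) :=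
  cpx_meas (M.src_meas (h false)) (M.src_meas (h true))

lemma eta_meas {S : Set (Idx N L K)} (n s)
    (h : ∀ c, Sum.inr (Sum.inr (Sum.inr (n, s, c))) ∈ S) :
    Measurable[M.sig S] (M.eta n s) :=
  cpx_meas (M.src_meas (h false)) (M.src_meas (h true))

lemma dphi_meas {S : Set (Idx N L K)} (n u) (h : Sum.inr (Sum.inl (n, u)) ∈ S) :
    Measurable[M.sig S] (M.dphi n u) := M.src_meas h

/-- phasor -/
noncomputable def ph (n : Fin N) (s : ℕ) (ω : Ω) : ℂ :=
  Complex.exp (Complex.I * ((M.phase n s ω : ℝ) : ℂ))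

/-- signal sum -/
noncomputable def sg (n : Fin N) (b : Fin B) (ω : Ω) : ℂ := ∑ l, ∑ m, M.ch l m n ω * x l m b

/-- distortion power -/
noncomputable def rr (n : Fin N) (b : Fin B) (ω : Ω) : ℝ :=
  ∑ l, ∑ m, Complex.normSq (x l m b) * Complex.normSq (M.ch l m n ω)

/-- scaled root -/
noncomputable def rt (n : Fin N) (b : Fin B) (ω : Ω) : ℂ :=
  (κ : ℂ) * ((Real.sqrt (M.rr n b ω) : ℝ) : ℂ)

lemma y_eq (n : Fin N) (b : Fin B) (ω : Ω) : M.y n b ω =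
    M.ph n (b + 1) ω * M.sg n b ω + M.rt n b ω * M.z n (b + 1) ω + M.eta n (b + 1) ω := rfl

lemma ph_meas {S : Set (Idx N L K)} (hS : Sp ⊆ S) (n s) : Measurable[M.sig S] (M.ph n s) := by
  have h : ∀ u, Measurable[M.sig S] (M.dphi n u) := fun u => M.dphi_meas n u (hS ⟨_, rfl⟩)
  have h2 : Measurable[M.sig S] (M.phase n s) := by
    unfold phase
    exact Finset.measurable_fun_sum _ fun u _ => h u
  unfold ph
  fun_prop

lemma sg_meas {S : Set (Idx N L K)} (hS : Sh ⊆ S) (n b) : Measurable[M.sig S] (M.sg n b) := by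
  have h : ∀ l m, Measurable[M.sig S] (M.ch l m n) := fun l m => M.ch_meas _ _ _ fun c => hS ⟨_, rfl⟩
  unfold sg
  exact Finset.measurable_fun_sum _ fun u _ => Finset.measurable_fun_sum _ fun v _ =>
    (h u v).mul_const _

lemma rr_meas {S : Set (Idx N L K)} (hS : Sh ⊆ S) (n b) : Measurable[M.sig S] (M.rr n b) := by
  have h : ∀ l m, Measurable[M.sig S] (M.ch l m n) := fun l m => M.ch_meas _ _ _ fun c => hS ⟨_, rfl⟩
  unfold rr
  exact Finset.measurable_fun_sum _ fun u _ => Finset.measurable_fun_sum _ fun v _ =>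
    (Complex.continuous_normSq.measurable.comp (h u v)).const_mul _

lemma rt_meas {S : Set (Idx N L K)} (hS : Sh ⊆ S) (n b) : Measurable[M.sig S] (M.rt n b) := by
  have h := M.rr_meas hS n b
  unfold rt
  fun_prop

lemma star_meas {m : MeasurableSpace Ω} {f : Ω → ℂ} (hf : Measurable[m] f) :
    Measurable[m] (fun ω => star (f ω)) :=
  (continuous_star.measurable).comp hf

lemma int_star (f : Ω → ℂ) : ∫ ω, star (f ω) = star (∫ ω, f ω) := integral_conj

lemma rr_nonneg (n b ω) : 0 ≤ M.rr n b ω :=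
  Finset.sum_nonneg fun _ _ => Finset.sum_nonneg fun _ _ =>
    mul_nonneg (Complex.normSq_nonneg _) (Complex.normSq_nonneg _)

lemma ph_norm (n s ω) : ‖M.ph n s ω‖ = 1 := by
  unfold ph
  rw [mul_comm]; exact Complex.norm_exp_ofReal_mul_I _

lemma ch_memLp (l k n) : MemLp (M.ch l k n) 2 ℙ :=
  c_memLp (M.meas_hRe l k n) (M.meas_hIm l k n) (M.law_hRe l k n) (M.law_hIm l k n)
lemma z_memLp (n s) : MemLp (M.z n s) 2 ℙ :=
  c_memLp (M.meas_zRe n s) (M.meas_zIm n s) (M.law_zRe n s) (M.law_zIm n s)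
lemma eta_memLp (n s) : MemLp (M.eta n s) 2 ℙ :=
  c_memLp (M.meas_etaRe n s) (M.meas_etaIm n s) (M.law_etaRe n s) (M.law_etaIm n s)

lemma ch_mean (l k n) : ∫ ω, M.ch l k n ω = 0 :=
  c_mean (M.meas_hRe l k n) (M.meas_hIm l k n) (M.law_hRe l k n) (M.law_hIm l k n)
lemma z_mean (n s) : ∫ ω, M.z n s ω = 0 :=
  c_mean (M.meas_zRe n s) (M.meas_zIm n s) (M.law_zRe n s) (M.law_zIm n s)
lemma eta_mean (n s) : ∫ ω, M.eta n s ω = 0 :=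
  c_mean (M.meas_etaRe n s) (M.meas_etaIm n s) (M.law_etaRe n s) (M.law_etaIm n s)

lemma sg_memLp (n b) : MemLp (M.sg n b) 2 ℙ := by
  unfold sg
  refine memLp_finsetSum _ fun l _ => memLp_finsetSum _ fun m _ => ?_
  exact MemLp.mul_const (M.ch_memLp l m n) _

lemma ph_sg_memLp (n b s) : MemLp (fun ω => M.ph n s ω * M.sg n b ω) 2 ℙ := by
  have h1 := ((M.ph_meas subset_rfl n s).mono (M.sig_le _) le_rfl)
  have h2 := ((M.sg_meas subset_rfl n b).mono (M.sig_le _) le_rfl)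
  refine (M.sg_memLp n b).of_le (h1.mul h2).aestronglyMeasurable ?_
  filter_upwards with ω
  simp [ph_norm]

lemma normSq_int (l k n) : Integrable (fun ω => Complex.normSq (M.ch l k n ω)) ℙ := by
  have := (memLp_two_iff_integrable_sq_norm (M.ch_memLp l k n).1).1 (M.ch_memLp l k n)
  simpa only [← Complex.normSq_eq_norm_sq] using this

lemma rr_int (n b) : Integrable (M.rr n b) ℙ := by
  unfold rr
  exact integrable_finsetSum _ fun l _ => integrable_finsetSum _ fun m _ =>
    (M.normSq_int l m n).const_mul _

lemma rt_memLp (n b) : MemLp (M.rt n b) 2 ℙ := by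
  have h2 := ((M.rt_meas subset_rfl n b).mono (M.sig_le _) le_rfl)
  rw [memLp_two_iff_integrable_sq_norm h2.aestronglyMeasurable]
  have : (fun ω => ‖M.rt n b ω‖ ^ 2) = fun ω => κ ^ 2 * M.rr n b ω := by
    ext ω
    simp [rt, mul_pow, abs_of_nonneg, Real.sqrt_nonneg, Real.sq_sqrt (M.rr_nonneg n b ω)]
  rw [this]
  exact (M.rr_int n b).const_mul _

lemma disj_z : Disjoint (Sz : Set (Idx N L K)) Szᶜ := disjoint_compl_right
lemma disj_e : Disjoint (Se : Set (Idx N L K)) Seᶜ := disjoint_compl_right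
lemma disj_ph : Disjoint (Sp : Set (Idx N L K)) Sh := by
  rw [Set.disjoint_left]; rintro _ ⟨p, rfl⟩ ⟨q, hq⟩; cases hq
lemma h_z : (Sh : Set (Idx N L K)) ⊆ Szᶜ := by
  rintro _ ⟨p, rfl⟩ ⟨q, hq⟩; cases hq
lemma p_z : (Sp : Set (Idx N L K)) ⊆ Szᶜ := by
  rintro _ ⟨p, rfl⟩ ⟨q, hq⟩; cases hq
lemma h_e : (Sh : Set (Idx N L K)) ⊆ Seᶜ := by
  rintro _ ⟨p, rfl⟩ ⟨q, hq⟩; cases hq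
lemma p_e : (Sp : Set (Idx N L K)) ⊆ Seᶜ := by
  rintro _ ⟨p, rfl⟩ ⟨q, hq⟩; cases hq
lemma z_e : (Sz : Set (Idx N L K)) ⊆ Seᶜ := by
  rintro _ ⟨p, rfl⟩ ⟨q, hq⟩; cases hq

lemma rt_z_memLp (n b s) : MemLp (fun ω => M.rt n b ω * M.z n s ω) 2 ℙ := by
  have a1 := M.rt_meas h_z n b
  have a2 := M.z_meas (S := Sz) n s (fun c => ⟨_, rfl⟩)
  have b1 := a1.mono (M.sig_le _) le_rfl
  have b2 := a2.mono (M.sig_le _) le_rfl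
  refine (memLp_two_iff_integrable_sq_norm (b1.mul b2).aestronglyMeasurable).2 ?_
  have hi := M.indepS disj_z.symm a1 a2
  have i1 := (memLp_two_iff_integrable_sq_norm (M.rt_memLp n b).1).1 (M.rt_memLp n b)
  have i2 := (memLp_two_iff_integrable_sq_norm (M.z_memLp n s).1).1 (M.z_memLp n s)
  have hm : Measurable fun w : ℂ => ‖w‖ ^ 2 := by fun_prop
  have := (hi.comp hm hm).integrable_mul i1 i2
  refine this.congr ?_
  filter_upwards with ω
  simp [mul_pow]

/-- signal part -/
noncomputable def Pt (n : Fin N) (b : Fin B) (ω : Ω) : ℂ := M.ph n (b + 1) ω * M.sg n b ω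
/-- distortion part -/
noncomputable def Qt (n : Fin N) (b : Fin B) (ω : Ω) : ℂ := M.rt n b ω * M.z n (b + 1) ω

lemma star_memLp {f : Ω → ℂ} (hf : MemLp f 2 ℙ) : MemLp (fun ω => star (f ω)) 2 ℙ := hf.star

lemma prod_int {f g : Ω → ℂ} (hf : MemLp f 2 ℙ) (hg : MemLp g 2 ℙ) :
    Integrable (fun ω => f ω * star (g ω)) ℙ :=
  hf.integrable_mul (star_memLp hg)

/-- generic zero: left factor has mean zero -/
lemma eta_zero (n s) {g : Ω → ℂ} (hg : Measurable[M.sig Seᶜ] g) :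
    ∫ ω, M.eta n s ω * g ω = 0 := by
  rw [M.int_mul disj_e (M.eta_meas (S := Se) n s (fun c => ⟨_, rfl⟩)) hg, eta_mean, zero_mul]

lemma z_zero (n s) {g : Ω → ℂ} (hg : Measurable[M.sig Szᶜ] g) :
    ∫ ω, M.z n s ω * g ω = 0 := by
  rw [M.int_mul disj_z (M.z_meas (S := Sz) n s (fun c => ⟨_, rfl⟩)) hg, z_mean, zero_mul]

lemma swap (f g : Ω → ℂ) (h : ∫ ω, g ω * star (f ω) = 0) : ∫ ω, f ω * star (g ω) = 0 := by
  have := int_star (fun ω => g ω * star (f ω))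
  rw [h, star_zero] at this
  rw [← this]
  congr 1; ext ω; simp [mul_comm]

lemma PQ_meas (n b) : Measurable[M.sig Seᶜ] (fun ω => M.Pt n b ω + M.Qt n b ω) :=
  ((M.ph_meas p_e _ _).mul (M.sg_meas h_e _ _)).add
    ((M.rt_meas h_e _ _).mul (M.z_meas _ _ (fun c => z_e ⟨_, rfl⟩)))

lemma PQ_memLp (n b) : MemLp (fun ω => M.Pt n b ω + M.Qt n b ω) 2 ℙ :=
  (M.ph_sg_memLp _ _ _).add (M.rt_z_memLp _ _ _)

lemma QP_zero (n b n' b') : ∫ ω, M.Qt n b ω * star (M.Pt n' b' ω) = 0 := by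
  have h := M.z_zero n (b + 1) (g := fun ω => M.rt n b ω * star (M.Pt n' b' ω))
    ((M.rt_meas h_z _ _).mul
      (star_meas ((M.ph_meas p_z _ _).mul (M.sg_meas h_z _ _))))
  rw [← h]
  congr 1; ext ω; unfold Qt; ring

lemma cov_split (n₁ n₂ b₁ b₂) : ∫ ω, M.y n₁ b₁ ω * star (M.y n₂ b₂ ω) =
    (∫ ω, M.Pt n₁ b₁ ω * star (M.Pt n₂ b₂ ω)) + (∫ ω, M.Qt n₁ b₁ ω * star (M.Qt n₂ b₂ ω))
     + ∫ ω, M.eta n₁ (b₁ + 1) ω * star (M.eta n₂ (b₂ + 1) ω) := by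
  have p1 : MemLp (M.Pt n₁ b₁) 2 ℙ := M.ph_sg_memLp _ _ _
  have p2 : MemLp (M.Pt n₂ b₂) 2 ℙ := M.ph_sg_memLp _ _ _
  have q1 : MemLp (M.Qt n₁ b₁) 2 ℙ := M.rt_z_memLp _ _ _
  have q2 : MemLp (M.Qt n₂ b₂) 2 ℙ := M.rt_z_memLp _ _ _
  have e1 := M.eta_memLp n₁ (b₁ + 1)
  have e2 := M.eta_memLp n₂ (b₂ + 1)
  have z1 := M.QP_zero n₁ b₁ n₂ b₂
  have z2 := swap _ _ (M.QP_zero n₂ b₂ n₁ b₁)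
  have z3 := M.eta_zero n₁ (b₁ + 1) (star_meas (M.PQ_meas n₂ b₂))
  have z4 := swap _ _ (M.eta_zero n₂ (b₂ + 1) (star_meas (M.PQ_meas n₁ b₁)))
  have hE : ∀ ω, M.y n₁ b₁ ω * star (M.y n₂ b₂ ω) =
      (M.Pt n₁ b₁ ω * star (M.Pt n₂ b₂ ω) + M.Qt n₁ b₁ ω * star (M.Qt n₂ b₂ ω) +
      M.eta n₁ (b₁ + 1) ω * star (M.eta n₂ (b₂ + 1) ω)) +
      (M.Qt n₁ b₁ ω * star (M.Pt n₂ b₂ ω) + M.Pt n₁ b₁ ω * star (M.Qt n₂ b₂ ω) +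
      (M.eta n₁ (b₁ + 1) ω * star (M.Pt n₂ b₂ ω + M.Qt n₂ b₂ ω) +
      (M.Pt n₁ b₁ ω + M.Qt n₁ b₁ ω) * star (M.eta n₂ (b₂ + 1) ω))) := by
    intro ω
    rw [y_eq, y_eq]
    simp only [Pt, Qt, star_add]
    ring
  have ipp := prod_int p1 p2
  have ipq := prod_int p1 q2
  have iqp := prod_int q1 p2
  have iqq := prod_int q1 q2
  have iee := prod_int e1 e2
  have ieX := prod_int e1 (M.PQ_memLp n₂ b₂)
  have iXe := prod_int (M.PQ_memLp n₁ b₁) e2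
  simp_rw [hE]
  rw [integral_add (by exact (ipp.add iqq).add iee) (by exact (iqp.add ipq).add (ieX.add iXe)),
    integral_add (by exact ipp.add iqq) iee, integral_add ipp iqq,
    integral_add (by exact iqp.add ipq) (by exact ieX.add iXe), integral_add iqp ipq,
    integral_add ieX iXe, z1, z2, z3, z4]
  simp

lemma eta_cov (hv : 0 ≤ σ2 * ξ) (n₁ n₂ s₁ s₂) :
    ∫ ω, M.eta n₁ s₁ ω * star (M.eta n₂ s₂ ω) =
      if n₁ = n₂ ∧ s₁ = s₂ then ((σ2 * ξ : ℝ) : ℂ) else 0 := by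
  split_ifs with h
  · obtain ⟨rfl, rfl⟩ := h
    exact c_sq (M.meas_etaRe _ _) (M.meas_etaIm _ _) (M.law_etaRe _ _) (M.law_etaIm _ _) hv
  · rw [M.int_mul (S := {i | ∃ c, i = Sum.inr (Sum.inr (Sum.inr (n₁, s₁, c)))})
      (T := {i | ∃ c, i = Sum.inr (Sum.inr (Sum.inr (n₂, s₂, c)))}) ?_
      (M.eta_meas n₁ s₁ fun c => ⟨_, rfl⟩) (star_meas (M.eta_meas n₂ s₂ fun c => ⟨_, rfl⟩)),
      eta_mean, zero_mul]
    rw [Set.disjoint_left]; rintro _ ⟨p, rfl⟩ ⟨q, hq⟩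
    simp at hq; tauto

lemma z_cov (n₁ n₂ s₁ s₂) :
    ∫ ω, M.z n₁ s₁ ω * star (M.z n₂ s₂ ω) = if n₁ = n₂ ∧ s₁ = s₂ then 1 else 0 := by
  split_ifs with h
  · obtain ⟨rfl, rfl⟩ := h
    have := c_sq (M.meas_zRe n₁ s₁) (M.meas_zIm n₁ s₁) (M.law_zRe _ _) (M.law_zIm _ _) zero_le_one
    rw [Complex.ofReal_one] at this
    exact this
  · rw [M.int_mul (S := {i | ∃ c, i = Sum.inr (Sum.inr (Sum.inl (n₁, s₁, c)))})
      (T := {i | ∃ c, i = Sum.inr (Sum.inr (Sum.inl (n₂, s₂, c)))}) ?_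
      (M.z_meas n₁ s₁ fun c => ⟨_, rfl⟩) (star_meas (M.z_meas n₂ s₂ fun c => ⟨_, rfl⟩)),
      z_mean, zero_mul]
    rw [Set.disjoint_left]; rintro _ ⟨p, rfl⟩ ⟨q, hq⟩
    simp at hq; tauto

lemma ch_cov (hlam : ∀ l k, 0 < lam l k) (l₁ k₁ n₁ l₂ k₂ n₂) :
    ∫ ω, M.ch l₁ k₁ n₁ ω * star (M.ch l₂ k₂ n₂ ω) =
      if n₁ = n₂ ∧ l₁ = l₂ ∧ k₁ = k₂ then (lam l₁ k₁ : ℂ) else 0 := by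
  split_ifs with h
  · obtain ⟨rfl, rfl, rfl⟩ := h
    exact c_sq (M.meas_hRe _ _ _) (M.meas_hIm _ _ _) (M.law_hRe _ _ _) (M.law_hIm _ _ _)
      (hlam _ _).le
  · rw [M.int_mul (S := {i | ∃ c, i = Sum.inl (l₁, k₁, n₁, c)})
      (T := {i | ∃ c, i = Sum.inl (l₂, k₂, n₂, c)}) ?_
      (M.ch_meas _ _ _ fun c => ⟨_, rfl⟩) (star_meas (M.ch_meas _ _ _ fun c => ⟨_, rfl⟩)),
      ch_mean, zero_mul]
    rw [Set.disjoint_left]; rintro _ ⟨p, rfl⟩ ⟨q, hq⟩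
    simp at hq; tauto

lemma sg_cov (hlam : ∀ l k, 0 < lam l k) (n₁ n₂ b₁ b₂) :
    ∫ ω, M.sg n₁ b₁ ω * star (M.sg n₂ b₂ ω) =
      if n₁ = n₂ then ∑ l, ∑ m, (lam l m : ℂ) * (x l m b₁ * star (x l m b₂)) else 0 := by
  have hE : ∀ ω, M.sg n₁ b₁ ω * star (M.sg n₂ b₂ ω) = ∑ l, ∑ m, ∑ l', ∑ m',
      (M.ch l m n₁ ω * star (M.ch l' m' n₂ ω)) * (x l m b₁ * star (x l' m' b₂)) := by
    intro ω
    simp only [sg, star_sum, star_mul', Finset.sum_mul]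
    refine Finset.sum_congr rfl fun l _ => Finset.sum_congr rfl fun m _ => ?_
    simp only [Finset.mul_sum]
    refine Finset.sum_congr rfl fun l' _ => Finset.sum_congr rfl fun m' _ => ?_
    ring
  have hI : ∀ l m l' m', Integrable (fun ω => (M.ch l m n₁ ω * star (M.ch l' m' n₂ ω)) *
      (x l m b₁ * star (x l' m' b₂))) ℙ := fun l m l' m' =>
    (prod_int (M.ch_memLp l m n₁) (M.ch_memLp l' m' n₂)).mul_const _
  simp_rw [hE]
  rw [integral_finsetSum _ fun l _ => integrable_finsetSum _ fun m _ =>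
    integrable_finsetSum _ fun l' _ => integrable_finsetSum _ fun m' _ => hI l m l' m']
  have : ∀ l m, ∫ ω, ∑ l', ∑ m', (M.ch l m n₁ ω * star (M.ch l' m' n₂ ω)) *
      (x l m b₁ * star (x l' m' b₂)) =
      if n₁ = n₂ then (lam l m : ℂ) * (x l m b₁ * star (x l m b₂)) else 0 := by
    intro l m
    rw [integral_finsetSum _ fun l' _ => integrable_finsetSum _ fun m' _ => hI l m l' m']
    simp_rw [integral_finsetSum _ fun m' _ => hI l m _ m', integral_mul_const,
      M.ch_cov hlam]
    by_cases hn : n₁ = n₂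
    · simp only [hn, true_and, if_true, ite_mul, zero_mul, ite_and]
      simp
    · simp [hn]
  have h3 : ∀ l, ∫ ω, ∑ m, ∑ l', ∑ m', (M.ch l m n₁ ω * star (M.ch l' m' n₂ ω)) *
      (x l m b₁ * star (x l' m' b₂)) =
      ∑ m, if n₁ = n₂ then (lam l m : ℂ) * (x l m b₁ * star (x l m b₂)) else 0 := by
    intro l
    rw [integral_finsetSum _ fun m _ =>
      integrable_finsetSum _ fun l' _ => integrable_finsetSum _ fun m' _ => hI l m l' m']
    simp_rw [this]
  simp_rw [h3]
  by_cases hn : n₁ = n₂ <;> simp [hn]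

lemma rr_mean (hlam : ∀ l k, 0 < lam l k) (n b) :
    ∫ ω, M.rr n b ω = ∑ l, ∑ m, lam l m * Complex.normSq (x l m b) := by
  unfold rr
  rw [integral_finsetSum _ fun l _ => integrable_finsetSum _ fun m _ =>
    (M.normSq_int l m n).const_mul _]
  refine Finset.sum_congr rfl fun l _ => ?_
  rw [integral_finsetSum _ fun m _ => (M.normSq_int l m n).const_mul _]
  refine Finset.sum_congr rfl fun m _ => ?_
  rw [integral_const_mul, mul_comm]
  congr 1
  exact c_normSq (M.meas_hRe _ _ _) (M.meas_hIm _ _ _) (M.law_hRe _ _ _) (M.law_hIm _ _ _)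
      (hlam _ _).le

lemma Q_cov (hlam : ∀ l k, 0 < lam l k) (n₁ n₂) (b₁ b₂ : Fin B) :
    ∫ ω, M.Qt n₁ b₁ ω * star (M.Qt n₂ b₂ ω) =
      if n₁ = n₂ ∧ b₁ = b₂ then
        ((κ ^ 2 * ∑ l, ∑ m, lam l m * Complex.normSq (x l m b₁) : ℝ) : ℂ) else 0 := by
  have hE : ∀ ω, M.Qt n₁ b₁ ω * star (M.Qt n₂ b₂ ω) =
    (M.z n₁ (b₁ + 1) ω * star (M.z n₂ (b₂ + 1) ω)) * (M.rt n₁ b₁ ω * star (M.rt n₂ b₂ ω)) := by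
    intro ω; simp only [Qt, star_mul']; ring
  simp_rw [hE]
  have hm := M.int_mul disj_z (f := fun ω => M.z n₁ (b₁ + 1) ω * star (M.z n₂ (b₂ + 1) ω))
      (g := fun ω => M.rt n₁ b₁ ω * star (M.rt n₂ b₂ ω))
      ((M.z_meas (S := Sz) n₁ _ (fun c => ⟨_, rfl⟩)).mul
      (star_meas (M.z_meas (S := Sz) n₂ _ (fun c => ⟨_, rfl⟩))))
      ((M.rt_meas h_z _ _).mul (star_meas (M.rt_meas h_z _ _)))
  rw [hm, z_cov]
  have hc : (n₁ = n₂ ∧ (b₁ : ℕ) + 1 = b₂ + 1) ↔ (n₁ = n₂ ∧ b₁ = b₂) := by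
    simp [Fin.ext_iff]
  simp only [hc]
  split_ifs with h
  · obtain ⟨rfl, rfl⟩ := h
    rw [one_mul, ← M.rr_mean hlam n₁ b₁, ← integral_const_mul, ← integral_complex_ofReal]
    congr 1; ext ω
    have := Complex.mul_conj (M.rt n₁ b₁ ω)
    refine this.trans ?_
    congr 1
    rw [rt, Complex.normSq_mul, Complex.normSq_ofReal, Complex.normSq_ofReal,
      Real.mul_self_sqrt (M.rr_nonneg _ _ _), sq]
  · simp

lemma phase_int (hδ : 0 ≤ δ) (n : Fin N) (c : ℝ) (s : Finset ℕ) :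
    ∫ ω, Complex.exp (Complex.I * ((c * ∑ u ∈ s, M.dphi n u ω : ℝ) : ℂ)) =
      ((Real.exp (-(δ / 2) * c ^ 2 * s.card) : ℝ) : ℂ) := by
  classical
  induction s using Finset.induction_on with
  | empty => simp
  | insert a s ha ih =>
    have hE : ∀ ω, Complex.exp (Complex.I * ((c * ∑ u ∈ insert a s, M.dphi n u ω : ℝ) : ℂ)) =
      Complex.exp (Complex.I * ((c * M.dphi n a ω : ℝ) : ℂ)) *
      Complex.exp (Complex.I * ((c * ∑ u ∈ s, M.dphi n u ω : ℝ) : ℂ)) := by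
      intro ω
      rw [Finset.sum_insert ha, ← Complex.exp_add]
      congr 1; push_cast; ring
    simp_rw [hE]
    have m1 : Measurable[M.sig {i | i = Sum.inr (Sum.inl (n, a))}] (M.dphi n a) :=
      M.dphi_meas n a rfl
    have m2 : Measurable[M.sig {i | ∃ u ∈ s, i = Sum.inr (Sum.inl (n, u))}]
        (fun ω => ∑ u ∈ s, M.dphi n u ω) :=
      Finset.measurable_fun_sum _ fun u hu => M.dphi_meas n u ⟨u, hu, rfl⟩
    rw [M.int_mul (S := {i | i = Sum.inr (Sum.inl (n, a))})
      (T := {i | ∃ u ∈ s, i = Sum.inr (Sum.inl (n, u))}) ?_ (by fun_prop) (by fun_prop), ih]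
    · have h1 : ∫ ω, Complex.exp (Complex.I * ((c * M.dphi n a ω : ℝ) : ℂ)) =
          ((Real.exp (-(δ / 2) * c ^ 2) : ℝ) : ℂ) := by
        have h := integral_map (μ := ℙ) (φ := M.dphi n a) (M.meas_dphi n a).aemeasurable
          (f := fun y : ℝ => Complex.exp (c * y * Complex.I))
          (by fun_prop)
        rw [← charFun_apply_real, M.law_dphi, charFun_gaussianReal,
          Real.coe_toNNReal _ hδ] at h
        have h' : ∀ ω, Complex.exp (Complex.I * ((c * M.dphi n a ω : ℝ) : ℂ)) =
          Complex.exp (c * M.dphi n a ω * Complex.I) := by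
          intro ω; congr 1; push_cast; ring
        simp_rw [h', ← h]
        push_cast
        congr 1
        push_cast; ring
      rw [h1, Finset.card_insert_of_notMem ha, ← Complex.ofReal_mul, ← Real.exp_add]
      congr 2; push_cast; ring
    · rw [Set.disjoint_left]; rintro _ rfl ⟨q, hq, h⟩
      simp at h; exact ha (h ▸ hq)

lemma phase_diff (n : Fin N) {s t : ℕ} (h : s ≤ t) (ω : Ω) :
    M.phase n t ω = M.phase n s ω + ∑ u ∈ Finset.Ioc s t, M.dphi n u ω := by
  induction t, h using Nat.le_induction with
  | base => simp
  | succ t h ih =>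
    have e1 : M.phase n (t + 1) ω = M.phase n t ω + M.dphi n (t + 1) ω := by
      unfold phase; rw [Finset.sum_Icc_succ_top (by omega)]
    rw [e1, ih, Finset.sum_Ioc_succ_top h, add_assoc]

lemma ph_mul_star (n : Fin N) (s t : ℕ) (ω : Ω) : M.ph n s ω * star (M.ph n t ω) =
    Complex.exp (Complex.I * ((M.phase n s ω - M.phase n t ω : ℝ) : ℂ)) := by
  have : star (M.ph n t ω) = Complex.exp (-(Complex.I * (M.phase n t ω : ℂ))) := by
    unfold ph
    rw [Complex.star_def, ← Complex.exp_conj]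
    simp
  rw [this]
  unfold ph
  rw [← Complex.exp_add]
  congr 1; push_cast; ring

lemma ph_cov (hδ : 0 ≤ δ) (n : Fin N) (s t : ℕ) : ∫ ω, M.ph n s ω * star (M.ph n t ω) =
    ((Real.exp (-(δ / 2) * |(s : ℝ) - t|) : ℝ) : ℂ) := by
  simp_rw [ph_mul_star]
  rcases le_total s t with h | h
  · have := M.phase_int hδ n (-1) (Finset.Ioc s t)
    have hc : (s : ℝ) ≤ t := by exact_mod_cast h
    rw [abs_of_nonpos (by linarith)]
    rw [Nat.card_Ioc, Nat.cast_sub h] at this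
    convert this using 3 with ω
    · rw [M.phase_diff n h]; push_cast; ring_nf
    · ring_nf
  · have := M.phase_int hδ n 1 (Finset.Ioc t s)
    have hc : (t : ℝ) ≤ s := by exact_mod_cast h
    rw [abs_of_nonneg (by linarith)]
    rw [Nat.card_Ioc, Nat.cast_sub h] at this
    convert this using 3 with ω
    · rw [M.phase_diff n h]; push_cast; ring_nf
    · ring_nf

lemma P_cov (hlam : ∀ l k, 0 < lam l k) (hδ : 0 ≤ δ) (n₁ n₂) (b₁ b₂ : Fin B) :
    ∫ ω, M.Pt n₁ b₁ ω * star (M.Pt n₂ b₂ ω) =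
      if n₁ = n₂ then ((Real.exp (-(δ / 2) * |((b₁ : ℕ) : ℝ) - ((b₂ : ℕ) : ℝ)|) : ℝ) : ℂ) *
        ∑ l, ∑ m, (lam l m : ℂ) * (x l m b₁ * star (x l m b₂)) else 0 := by
  have hE : ∀ ω, M.Pt n₁ b₁ ω * star (M.Pt n₂ b₂ ω) =
    (M.ph n₁ (b₁ + 1) ω * star (M.ph n₂ (b₂ + 1) ω)) * (M.sg n₁ b₁ ω * star (M.sg n₂ b₂ ω)) := by
    intro ω; simp only [Pt, star_mul']; ring
  simp_rw [hE]
  have hm := M.int_mul disj_ph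
      (f := fun ω => M.ph n₁ (b₁ + 1) ω * star (M.ph n₂ (b₂ + 1) ω))
      (g := fun ω => M.sg n₁ b₁ ω * star (M.sg n₂ b₂ ω))
      ((M.ph_meas subset_rfl _ _).mul (star_meas (M.ph_meas subset_rfl _ _)))
      ((M.sg_meas subset_rfl _ _).mul (star_meas (M.sg_meas subset_rfl _ _)))
  rw [hm, M.sg_cov hlam]
  split_ifs with h
  · subst h
    rw [M.ph_cov hδ]
    push_cast
    simp
  · simp

lemma cov_main (hlam : ∀ l k, 0 < lam l k) (hv : 0 ≤ σ2 * ξ) (hδ : 0 ≤ δ) (n₁ n₂)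
    (b₁ b₂ : Fin B) :
    ∫ ω, M.y n₁ b₁ ω * star (M.y n₂ b₂ ω) =
      PsiMat lam σ2 ξ κ δ x b₁ b₂ * (1 : Matrix (Fin N) (Fin N) ℂ) n₁ n₂ := by
  rw [cov_split, M.P_cov hlam hδ, M.Q_cov hlam, M.eta_cov hv]
  have hc : (n₁ = n₂ ∧ (b₁ : ℕ) + 1 = b₂ + 1) ↔ (n₁ = n₂ ∧ b₁ = b₂) := by
    simp [Fin.ext_iff]
  simp only [hc]
  by_cases hn : n₁ = n₂
  swap
  · simp [hn]
  subst hn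
  have hX : PsiMat lam σ2 ξ κ δ x b₁ b₂ = (∑ l, ∑ m, (lam l m : ℂ) * Xmat κ δ (x l m) b₁ b₂) +
      ((σ2 * ξ : ℝ) : ℂ) * (1 : Matrix (Fin B) (Fin B) ℂ) b₁ b₂ := by
    simp [PsiMat, Matrix.add_apply, Matrix.sum_apply, Matrix.smul_apply]
  rw [hX]
  by_cases hb : b₁ = b₂
  · subst hb
    simp only [Matrix.one_apply_eq, mul_one, and_self, if_true, Xmat, Matrix.of_apply, sub_self,
      abs_zero, mul_zero, Real.exp_zero, Complex.ofReal_one, one_mul]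
    congr 1
    push_cast
    simp only [Finset.mul_sum, ← Finset.sum_add_distrib]
    refine Finset.sum_congr rfl fun l _ => Finset.sum_congr rfl fun m _ => ?_
    rw [Complex.star_def, Complex.mul_conj]
    ring
  · simp only [Matrix.one_apply_eq, mul_one, hb, and_false, if_true, if_false, Xmat,
      Matrix.of_apply, Matrix.one_apply_ne hb, mul_zero, add_zero, Finset.mul_sum]
    refine Finset.sum_congr rfl fun l _ => Finset.sum_congr rfl fun m _ => ?_
    ring

end Aux

end MIMOModel

/-- **Covariance of the stacked received pilot signal (Theorem 1, first ingredient).**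
`E[ψ_j ψ_jᴴ] = Ψ_j ⊗ I_N`; equivalently, each `N × N` block satisfies
`E[y_j(b₁) y_j(b₂)ᴴ] = [Ψ_j]_{b₁,b₂} · I_N`. -/
theorem pilot_signal_covariance
    {Ω : Type*} [MeasureSpace Ω] [IsProbabilityMeasure (ℙ : Measure Ω)]
    {N B L K : ℕ} {lam : Fin L → Fin K → ℝ} {σ2 ξ κ δ : ℝ}
    {x : Fin L → Fin K → Fin B → ℂ}
    (M : MIMOModel Ω N B L K lam σ2 ξ κ δ x)
    (hlam : ∀ l k, 0 < lam l k) (hσ2 : 0 < σ2) (hξ : 1 ≤ ξ) (hκ : 0 ≤ κ) (hδ : 0 ≤ δ)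
    :
    ((Matrix.of fun p q : Fin B × Fin N => ∫ ω, M.y p.2 p.1 ω * star (M.y q.2 q.1 ω))
        = PsiMat lam σ2 ξ κ δ x ⊗ₖ (1 : Matrix (Fin N) (Fin N) ℂ)) ∧
    ∀ b₁ b₂ : Fin B,
      (Matrix.of fun n₁ n₂ : Fin N => ∫ ω, M.y n₁ b₁ ω * star (M.y n₂ b₂ ω))
        = PsiMat lam σ2 ξ κ δ x b₁ b₂ • (1 : Matrix (Fin N) (Fin N) ℂ) := by
  have hv : 0 ≤ σ2 * ξ := mul_nonneg hσ2.le (by linarith)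
  refine ⟨?_, fun b₁ b₂ => ?_⟩
  · ext ⟨b₁, n₁⟩ ⟨b₂, n₂⟩
    rw [Matrix.kroneckerMap_apply]
    exact M.cov_main hlam hv hδ n₁ n₂ b₁ b₂
  · ext n₁ n₂
    rw [Matrix.smul_apply, smul_eq_mul]
    exact M.cov_main hlam hv hδ n₁ n₂ b₁ b₂
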